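/- Let f ∈ H²(𝔻²) with f(0) ≠ 0. Then f is weakly inner (⟨f, z^a w^b f⟩ = 0 for all (a,b) ≠ (0,0)) if and only if every optimal polynomial approximant to 1/f is the same constant: p_n*[f] = p_0*[f] = conj(f(0))/‖f‖² for all n ≥ 0. -/

import Mathlib

noncomputable section

open Finset

/-- Coefficients of a formal power series in two variables `z, w`
(the coefficient of `z^j w^k` is the value at `(j, k)`). -/
abbrev Coef := ℕ × ℕ → ℂ

/-- Coefficients of a formal power series in one variable. -/
abbrev Coef1 := ℕ → ℂ

/-- Membership in the Hardy space `H²(𝔻²)`: square-summable coefficients. -/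
def MemH2 (f : Coef) : Prop := Summable (fun jk : ℕ × ℕ => ‖f jk‖ ^ 2)

/-- Membership in the Hardy space `H²(𝔻)`. -/
def MemH2₁ (f : Coef1) : Prop := Summable (fun j : ℕ => ‖f j‖ ^ 2)

/-- The `H²(𝔻²)` inner product `⟨f, g⟩ = ∑ a_{jk} conj (b_{jk})`. -/
def Hinner (f g : Coef) : ℂ := ∑' jk : ℕ × ℕ, f jk * (starRingEnd ℂ) (g jk)

/-- The `H²(𝔻²)` norm. -/
def Hnorm (f : Coef) : ℝ := Real.sqrt (∑' jk : ℕ × ℕ, ‖f jk‖ ^ 2)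

/-- The `H²(𝔻)` norm. -/
def Hnorm1 (f : Coef1) : ℝ := Real.sqrt (∑' j : ℕ, ‖f j‖ ^ 2)

/-- The constant function `1` as an element of `H²(𝔻²)`. -/
def oneH : Coef := fun jk => if jk = (0, 0) then 1 else 0

/-- The constant function `1` as an element of `H²(𝔻)`. -/
def oneH1 : Coef1 := fun j => if j = 0 then 1 else 0

/-- Cauchy product `q·f` of two formal power series in two variables
(used for multiplication of `f ∈ H²(𝔻²)` by a polynomial `q`). -/
def pmul (q f : Coef) : Coef := fun jk =>
  ∑ a ∈ range (jk.1 + 1), ∑ b ∈ range (jk.2 + 1), q (a, b) * f (jk.1 - a, jk.2 - b)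

/-- Multiplication of a one-variable power series by a one-variable polynomial. -/
def pmul1 (q : Polynomial ℂ) (f : Coef1) : Coef1 := fun j =>
  ∑ a ∈ range (j + 1), q.coeff a * f (j - a)

/-- Degree-lexicographic enumeration of the monomials in `z, w`:
`chi 0 = (0,0) ↔ 1`, `chi 1 = (1,0) ↔ z`, `chi 2 = (0,1) ↔ w`,
`chi 3 = (2,0) ↔ z²`, `chi 4 = (1,1) ↔ zw`, `chi 5 = (0,2) ↔ w²`, … -/
def chi : ℕ → ℕ × ℕ
  | 0 => (0, 0)
  | n + 1 =>
    let p := chi n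
    if p.1 = 0 then (p.2 + 1, 0) else (p.1 - 1, p.2 + 1)

/-- The monomial `z^(ab.1) w^(ab.2)` as a coefficient function. -/
def mono (ab : ℕ × ℕ) : Coef := fun jk => if jk = ab then 1 else 0

/-- `p` lies in `P_n = span {χ_0, …, χ_n}`. -/
def inPn (n : ℕ) (p : Coef) : Prop := ∀ ab, p ab ≠ 0 → ∃ k ≤ n, chi k = ab

/-- `p` is a (two-variable) polynomial: finitely many nonzero coefficients. -/
def IsPoly2 (p : Coef) : Prop := (Function.support p).Finite

/-- Evaluation of a power series at the point `(z, w)`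
(absolutely convergent for `f ∈ H²(𝔻²)` and `(z,w)` in the open bidisk,
and for any polynomial at any point). -/
def heval (f : Coef) (z w : ℂ) : ℂ := ∑' jk : ℕ × ℕ, f jk * z ^ jk.1 * w ^ jk.2

/-- `p` is the `n`-th optimal polynomial approximant to `1/f`:
`p ∈ P_n` and `p` minimizes `‖qf - 1‖` over `q ∈ P_n`. -/
def IsOPA (f : Coef) (n : ℕ) (p : Coef) : Prop :=
  inPn n p ∧ ∀ q : Coef, inPn n q →
    Hnorm (pmul p f - oneH) ≤ Hnorm (pmul q f - oneH)

/-- `q` has bidegree `(N, M)`: degree `N` in `z` and degree `M` in `w`. -/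
def HasBidegree (q : Coef) (N M : ℕ) : Prop :=
  (∀ a b : ℕ, q (a, b) ≠ 0 → a ≤ N ∧ b ≤ M) ∧ (∃ b, q (N, b) ≠ 0) ∧ (∃ a, q (a, M) ≠ 0)

/-- Reflection of a polynomial of bidegree `(N, M)`:
the coefficient of `z^j w^k` is `conj` of the coefficient of `z^(N-j) w^(M-k)`. -/
def reflPoly (N M : ℕ) (q : Coef) : Coef := fun jk =>
  if jk.1 ≤ N ∧ jk.2 ≤ M then (starRingEnd ℂ) (q (N - jk.1, M - jk.2)) else 0

/-- The degree-lexicographic index of the monomial `z^(ab.1) w^(ab.2)`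
(the inverse of `chi`). -/
def lexIndex (ab : ℕ × ℕ) : ℕ := (ab.1 + ab.2) * (ab.1 + ab.2 + 1) / 2 + ab.2

/-- `pound k j` = the degree-lexicographic index `£(k,j)` of the monomial `(χ_k)^j`. -/
def pound (k j : ℕ) : ℕ := lexIndex (j * (chi k).1, j * (chi k).2)

/-- The linear factor `z - α` as a coefficient function. -/
def linZ (α : ℂ) : Coef := fun jk => if jk = (1, 0) then 1 else if jk = (0, 0) then -α else 0

/-- The linear factor `w - β` as a coefficient function. -/
def linW (β : ℂ) : Coef := fun jk => if jk = (0, 1) then 1 else if jk = (0, 0) then -β else 0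

/-!
A polynomial `p ∈ P_n` is an optimal approximant exactly when `p f` is the orthogonal projection of
`1` onto the finite-dimensional space `P_n · f`. Hence approximants exist, and they are unique
because formal power series form an integral domain. Orthogonality of the residual `p f - 1` to
`χ_k f` for `k ≤ n` gives the normal equations `⟨p f, χ_k f⟩ = ⟨1, χ_k f⟩`, whose right-hand side
vanishes for `k ≥ 1`. For a nonzero constant `p = c` they say that `c ‖f‖² = conj (f 0)` and
`⟨f, χ_k f⟩ = 0` for `1 ≤ k ≤ n`.
-/

section BestApproximation

variable {𝕜 E : Type*} [RCLike 𝕜] [NormedAddCommGroup E] [InnerProductSpace 𝕜 E]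

theorem eq_starProjection_iff_forall_norm_sub_le {K : Submodule 𝕜 E} [K.HasOrthogonalProjection]
    {u v : E} (hv : v ∈ K) :
    v = K.starProjection u ↔ ∀ w ∈ K, ‖v - u‖ ≤ ‖w - u‖ := by
  have hbdd : BddBelow (Set.range fun w : K => ‖u - w‖) :=
    ⟨0, Set.forall_mem_range.2 fun _ => norm_nonneg _⟩
  constructor
  · rintro rfl w hw
    rw [norm_sub_rev, norm_sub_rev w, K.starProjection_minimal]
    exact ciInf_le hbdd ⟨w, hw⟩
  · intro hmin
    have hinf : ‖u - v‖ = ⨅ w : K, ‖u - w‖ := by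
      refine le_antisymm (le_ciInf fun w => ?_) (ciInf_le hbdd ⟨v, hv⟩)
      simpa only [norm_sub_rev] using hmin w w.2
    exact (Submodule.eq_starProjection_of_mem_of_inner_eq_zero hv
      ((K.norm_eq_iInf_iff_inner_eq_zero hv).1 hinf)).symm

theorem eq_starProjection_iff_forall_inner_eq_of_span_eq {K : Submodule 𝕜 E}
    [K.HasOrthogonalProjection] {s : Set E} (hs : Submodule.span 𝕜 s = K) {u v : E} (hv : v ∈ K) :
    v = K.starProjection u ↔ ∀ w ∈ s, inner 𝕜 w v = inner 𝕜 w u := by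
  constructor
  · rintro rfl w hw
    rw [← Submodule.inner_starProjection_left_eq_right,
      Submodule.starProjection_eq_self_iff.2 (hs ▸ Submodule.subset_span hw)]
  · intro h
    have horth : Submodule.span 𝕜 {u - v} ⟂ K := by
      rw [← hs, Submodule.isOrtho_comm, Submodule.isOrtho_span]
      rintro w hw _ rfl
      rw [inner_sub_right, h w hw, sub_self]
    exact (Submodule.eq_starProjection_of_mem_orthogonal hv
      (horth (Submodule.mem_span_singleton_self _))).symm

end BestApproximation

section CauchyProduct

/-- The coefficient array `p` read as a power series in `z` over the power series in `w`; it turns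
`pmul` into multiplication in an integral domain. -/
def iteratedPowerSeries (p : Coef) : PowerSeries (PowerSeries ℂ) :=
  PowerSeries.mk fun j => PowerSeries.mk fun k => p (j, k)

theorem iteratedPowerSeries_injective : Function.Injective iteratedPowerSeries := by
  intro p q h
  ext ⟨j, k⟩
  simpa [iteratedPowerSeries] using
    congrArg (fun F => PowerSeries.coeff k (PowerSeries.coeff j F)) h

theorem iteratedPowerSeries_pmul (p f : Coef) :
    iteratedPowerSeries (pmul p f) = iteratedPowerSeries p * iteratedPowerSeries f := by
  ext j k
  simp [iteratedPowerSeries, pmul, PowerSeries.coeff_mul,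
    Finset.Nat.sum_antidiagonal_eq_sum_range_succ_mk]

theorem pmul_left_injective {f : Coef} (hf : f ≠ 0) :
    Function.Injective fun p : Coef => pmul p f := by
  intro p q h
  have hF : iteratedPowerSeries f ≠ 0 := fun h0 =>
    hf (iteratedPowerSeries_injective (h0.trans (by ext; simp [iteratedPowerSeries])))
  apply iteratedPowerSeries_injective
  apply mul_right_cancel₀ hF
  rw [← iteratedPowerSeries_pmul, ← iteratedPowerSeries_pmul]
  exact congrArg iteratedPowerSeries h

theorem pmul_add (p q f : Coef) : pmul (p + q) f = pmul p f + pmul q f := by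
  ext jk
  simp only [pmul, Pi.add_apply, add_mul, sum_add_distrib]

theorem pmul_smul (c : ℂ) (p f : Coef) : pmul (c • p) f = c • pmul p f := by
  ext jk
  simp only [pmul, Pi.smul_apply, smul_eq_mul, mul_assoc, mul_sum]

theorem pmul_mono_apply (ab : ℕ × ℕ) (f : Coef) (jk : ℕ × ℕ) :
    pmul (mono ab) f jk = if ab ≤ jk then f (jk - ab) else 0 := by
  obtain ⟨a, b⟩ := ab
  obtain ⟨j, k⟩ := jk
  simp [pmul, mono, ite_and, Prod.mk_le_mk]

theorem pmul_mono_zero (f : Coef) : pmul (mono (0, 0)) f = f := by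
  ext jk
  simp [pmul_mono_apply, ← Prod.zero_eq_mk]

theorem pmul_mono_apply_zero (ab : ℕ × ℕ) (f : Coef) :
    pmul (mono ab) f (0, 0) = if ab = (0, 0) then f (0, 0) else 0 := by
  simp [pmul_mono_apply, ← Prod.zero_eq_mk]

theorem pmul_eq_sum_smul_pmul_mono {s : Finset (ℕ × ℕ)} {p : Coef} (hp : ∀ ab, p ab ≠ 0 → ab ∈ s)
    (f : Coef) : pmul p f = ∑ ab ∈ s, p ab • pmul (mono ab) f := by
  let pmulRight : Coef →ₗ[ℂ] Coef :=
    { toFun := fun q => pmul q f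
      map_add' := fun q r => pmul_add q r f
      map_smul' := fun c q => pmul_smul c q f }
  have hsum : p = ∑ ab ∈ s, p ab • mono ab := by
    ext jk
    simpa [mono] using not_imp_comm.1 (hp jk)
  calc pmul p f = pmulRight (∑ ab ∈ s, p ab • mono ab) := by rw [← hsum]; rfl
    _ = ∑ ab ∈ s, p ab • pmul (mono ab) f := by rw [map_sum]; simp only [map_smul]; rfl

end CauchyProduct

section Monomials

theorem chi_surjective : Function.Surjective chi := by
  -- `chi` runs through the monomials of degree `d` from `(d, 0)` to `(0, d)`, then to `(d + 1, 0)`.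
  suffices h : ∀ d, ∀ j ≤ d, ∃ n, chi n = (d - j, j) by
    rintro ⟨a, b⟩
    simpa using h (a + b) b (Nat.le_add_left b a)
  intro d
  induction d with
  | zero => exact fun j hj => ⟨0, by simp [chi, Nat.le_zero.1 hj]⟩
  | succ d ih =>
    intro j
    induction j with
    | zero =>
      obtain ⟨n, hn⟩ := ih d le_rfl
      exact fun _ => ⟨n + 1, by simp [chi, hn]⟩
    | succ j ihj =>
      intro hj
      obtain ⟨n, hn⟩ := ihj (by omega)
      refine ⟨n + 1, ?_⟩
      have hz : d + 1 - j ≠ 0 := by omega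
      simp only [chi, hn, hz, if_false, Prod.mk.injEq, and_true]
      omega

theorem inPn_iff_mem_image_chi {n : ℕ} {p : Coef} :
    inPn n p ↔ ∀ ab, p ab ≠ 0 → ab ∈ (Iic n).image chi := by
  simp only [inPn, mem_image, mem_Iic]

theorem inPn_zero (n : ℕ) : inPn n 0 := fun _ h => absurd rfl h

theorem inPn_add {n : ℕ} {p q : Coef} (hp : inPn n p) (hq : inPn n q) : inPn n (p + q) := by
  intro ab h
  by_cases hpab : p ab = 0
  · exact hq ab fun hqab => h (by simp [hpab, hqab])
  · exact hp ab hpab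

theorem inPn_smul {n : ℕ} {p : Coef} (c : ℂ) (hp : inPn n p) : inPn n (c • p) :=
  fun ab h => hp ab (right_ne_zero_of_mul h)

theorem inPn_mono {k n : ℕ} (hk : k ≤ n) : inPn n (mono (chi k)) :=
  fun _ h => ⟨k, hk, of_not_not fun hne => h (if_neg (Ne.symm hne))⟩

end Monomials

section HardySpace

/-- `H²(𝔻²)` as a Hilbert space: the space `ℓ²` of square-summable coefficient arrays. -/
abbrev H2 := lp (fun _ : ℕ × ℕ => ℂ) 2

theorem memH2_iff_memℓp {f : Coef} : MemH2 f ↔ Memℓp f 2 := by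
  simp [MemH2, memℓp_gen_iff]

namespace MemH2

variable {f g : Coef}

/-- A square-summable coefficient array, bundled as an element of the Hilbert space `H2`. -/
def toH2 (hf : MemH2 f) : H2 := ⟨f, memH2_iff_memℓp.1 hf⟩

theorem norm_toH2 (hf : MemH2 f) : ‖hf.toH2‖ = Hnorm f := by
  have h := lp.norm_rpow_eq_tsum (p := 2) (by norm_num) hf.toH2
  simp only [ENNReal.toReal_ofNat, Real.rpow_ofNat] at h
  rw [← Real.sqrt_sq (norm_nonneg hf.toH2), h]
  rfl

theorem inner_toH2 (hf : MemH2 f) (hg : MemH2 g) : inner ℂ hf.toH2 hg.toH2 = Hinner g f :=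
  lp.inner_eq_tsum _ _

theorem hinner_self (hf : MemH2 f) : Hinner f f = (Hnorm f : ℂ) ^ 2 := by
  rw [← hf.inner_toH2 hf, inner_self_eq_norm_sq_to_K, norm_toH2]
  rfl

theorem hnorm_ne_zero (hf : MemH2 f) (h0 : f ≠ 0) : Hnorm f ≠ 0 := by
  rw [← hf.norm_toH2, norm_ne_zero_iff]
  exact fun h => h0 (congrArg (fun x : H2 => (x : Coef)) h)

theorem sub (hf : MemH2 f) (hg : MemH2 g) : MemH2 (f - g) :=
  memH2_iff_memℓp.2 ((memH2_iff_memℓp.1 hf).sub (memH2_iff_memℓp.1 hg))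

theorem pmul_mono (hf : MemH2 f) (ab : ℕ × ℕ) : MemH2 (pmul (mono ab) f) := by
  refine ((add_left_injective ab).summable_iff fun jk hjk => ?_).1 (hf.congr fun jk => ?_)
  · have hle : ¬ab ≤ jk := fun h => hjk ⟨jk - ab, tsub_add_cancel_of_le h⟩
    simp [pmul_mono_apply, hle]
  · simp [pmul_mono_apply]

theorem coe_sum_smul_toH2_pmul_mono (hf : MemH2 f) {n : ℕ} {p : Coef} (hp : inPn n p) :
    ⇑(∑ ab ∈ (Iic n).image chi, p ab • (hf.pmul_mono ab).toH2) = pmul p f := by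
  rw [lp.coeFn_sum]
  exact (pmul_eq_sum_smul_pmul_mono (inPn_iff_mem_image_chi.1 hp) f).symm

theorem pmul (hf : MemH2 f) {n : ℕ} {p : Coef} (hp : inPn n p) : MemH2 (pmul p f) := by
  rw [memH2_iff_memℓp, ← hf.coe_sum_smul_toH2_pmul_mono hp]
  exact lp.memℓp _

end MemH2

theorem memH2_oneH : MemH2 oneH :=
  summable_of_ne_finset_zero (s := {(0, 0)}) fun jk h => by
    simp [oneH, notMem_singleton.1 h]

theorem hinner_smul_left (c : ℂ) (f g : Coef) : Hinner (c • f) g = c * Hinner f g := by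
  simp only [Hinner, Pi.smul_apply, smul_eq_mul, mul_assoc, tsum_mul_left]

theorem hinner_oneH_left (g : Coef) : Hinner oneH g = (starRingEnd ℂ) (g (0, 0)) := by
  simp [Hinner, oneH]

end HardySpace

section OptimalApproximants

variable {f p : Coef} {n : ℕ}

/-- The subspace `P_n · f` of `H²(𝔻²)`, spanned by `χ_0 f, …, χ_n f`. -/
def multiplesSpan (hf : MemH2 f) (n : ℕ) : Submodule ℂ H2 :=
  Submodule.span ℂ ((fun k => (hf.pmul_mono (chi k)).toH2) '' Set.Iic n)

instance (hf : MemH2 f) (n : ℕ) : FiniteDimensional ℂ (multiplesSpan hf n) :=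
  FiniteDimensional.span_of_finite ℂ ((Set.finite_Iic n).image _)

theorem toH2_pmul_mem_multiplesSpan (hf : MemH2 f) (hp : inPn n p) :
    (hf.pmul hp).toH2 ∈ multiplesSpan hf n := by
  have hsum : (hf.pmul hp).toH2 = ∑ ab ∈ (Iic n).image chi, p ab • (hf.pmul_mono ab).toH2 :=
    lp.ext (hf.coe_sum_smul_toH2_pmul_mono hp).symm
  rw [hsum]
  refine Submodule.sum_mem _ fun ab hab => Submodule.smul_mem _ _ (Submodule.subset_span ?_)
  obtain ⟨k, hk, rfl⟩ := mem_image.1 hab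
  exact ⟨k, mem_Iic.1 hk, rfl⟩

theorem mem_multiplesSpan_iff (hf : MemH2 f) {x : H2} :
    x ∈ multiplesSpan hf n ↔ ∃ (p : Coef) (hp : inPn n p), (hf.pmul hp).toH2 = x := by
  refine ⟨fun hx => ?_, ?_⟩
  · suffices h : ∃ p, inPn n p ∧ pmul p f = x by
      obtain ⟨p, hp, hpx⟩ := h
      exact ⟨p, hp, lp.ext hpx⟩
    induction hx using Submodule.span_induction with
    | mem x hx =>
      obtain ⟨k, hk, rfl⟩ := hx
      exact ⟨mono (chi k), inPn_mono hk, rfl⟩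
    | zero => exact ⟨0, inPn_zero n, by ext; simp [pmul]⟩
    | add x y _ _ hx hy =>
      obtain ⟨p, hp, hpx⟩ := hx
      obtain ⟨q, hq, hqy⟩ := hy
      exact ⟨p + q, inPn_add hp hq, by rw [pmul_add, hpx, hqy, lp.coeFn_add]⟩
    | smul c x _ hx =>
      obtain ⟨p, hp, hpx⟩ := hx
      exact ⟨c • p, inPn_smul c hp, by rw [pmul_smul, hpx, lp.coeFn_smul]⟩
  · rintro ⟨p, hp, rfl⟩
    exact toH2_pmul_mem_multiplesSpan hf hp

theorem isOPA_iff_eq_starProjection (hf : MemH2 f) (hp : inPn n p) :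
    IsOPA f n p ↔
      (hf.pmul hp).toH2 = (multiplesSpan hf n).starProjection memH2_oneH.toH2 := by
  have hdist {q : Coef} (hq : inPn n q) :
      ‖(hf.pmul hq).toH2 - memH2_oneH.toH2‖ = Hnorm (pmul q f - oneH) :=
    ((hf.pmul hq).sub memH2_oneH).norm_toH2
  rw [eq_starProjection_iff_forall_norm_sub_le (toH2_pmul_mem_multiplesSpan hf hp), IsOPA,
    and_iff_right hp]
  constructor
  · intro h w hw
    obtain ⟨q, hq, rfl⟩ := (mem_multiplesSpan_iff hf).1 hw
    exact (hdist hp).trans_le ((h q hq).trans (hdist hq).ge)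
  · intro h q hq
    exact (hdist hp).ge.trans ((h _ (toH2_pmul_mem_multiplesSpan hf hq)).trans (hdist hq).le)

theorem exists_isOPA (hf : MemH2 f) (n : ℕ) : ∃ p, IsOPA f n p := by
  obtain ⟨p, hp, hproj⟩ := (mem_multiplesSpan_iff hf).1
    ((multiplesSpan hf n).starProjection_apply_mem memH2_oneH.toH2)
  exact ⟨p, (isOPA_iff_eq_starProjection hf hp).2 hproj⟩

theorem IsOPA.unique {q : Coef} (hp : IsOPA f n p) (hq : IsOPA f n q)
    (hf : MemH2 f) (h0 : f ≠ 0) : p = q := by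
  refine pmul_left_injective h0 ?_
  have h := ((isOPA_iff_eq_starProjection hf hp.1).1 hp).trans
    ((isOPA_iff_eq_starProjection hf hq.1).1 hq).symm
  exact congrArg (fun x : H2 => (x : Coef)) h

theorem forall_isOPA_eq_iff (hf : MemH2 f) (h0 : f ≠ 0) :
    (∀ q, IsOPA f n q → q = p) ↔ IsOPA f n p := by
  refine ⟨fun h => ?_, fun hp q hq => hq.unique hp hf h0⟩
  obtain ⟨q, hq⟩ := exists_isOPA hf n
  exact h q hq ▸ hq

theorem isOPA_iff_normal_equations (hf : MemH2 f) (hp : inPn n p) :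
    IsOPA f n p ↔ ∀ k ≤ n, Hinner (pmul p f) (pmul (mono (chi k)) f) =
      Hinner oneH (pmul (mono (chi k)) f) := by
  rw [isOPA_iff_eq_starProjection hf hp,
    eq_starProjection_iff_forall_inner_eq_of_span_eq (K := multiplesSpan hf n) rfl
      (toH2_pmul_mem_multiplesSpan hf hp)]
  simp only [Set.forall_mem_image, Set.mem_Iic, MemH2.inner_toH2]

theorem isOPA_const_iff (hf : MemH2 f) (c : ℂ) :
    IsOPA f n (c • mono (0, 0)) ↔ ∀ k ≤ n, c * Hinner f (pmul (mono (chi k)) f) =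
      if chi k = (0, 0) then (starRingEnd ℂ) (f (0, 0)) else 0 := by
  rw [isOPA_iff_normal_equations hf (inPn_smul c (inPn_mono (k := 0) n.zero_le) :
    inPn n (c • mono (0, 0)))]
  simp only [pmul_smul, pmul_mono_zero, hinner_smul_left, hinner_oneH_left, pmul_mono_apply_zero,
    apply_ite, map_zero]

end OptimalApproximants

/-- Let `f ∈ H²(𝔻²)` with `f(0) ≠ 0`. Then `f` is weakly inner
(`⟨f, z^a w^b f⟩ = 0` for all `(a,b) ≠ (0,0)`) iff every OPA to `1/f` equals the constant
`conj(f(0))/‖f‖²`. -/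
theorem statement12 (f : Coef) (hf : MemH2 f) (hf0 : f (0, 0) ≠ 0) :
    (∀ a b : ℕ, (a, b) ≠ (0, 0) → Hinner f (pmul (mono (a, b)) f) = 0) ↔
    (∀ n : ℕ, ∀ p : Coef, IsOPA f n p →
      p = fun ab => if ab = (0, 0) then
        (starRingEnd ℂ) (f (0, 0)) / ((Hnorm f : ℂ) ^ 2) else 0) := by
  have hf_ne : f ≠ 0 := fun h => hf0 (congrFun h (0, 0))
  have hnorm : (Hnorm f : ℂ) ^ 2 ≠ 0 :=
    pow_ne_zero 2 (Complex.ofReal_ne_zero.2 (hf.hnorm_ne_zero hf_ne))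
  set c : ℂ := (starRingEnd ℂ) (f (0, 0)) / ((Hnorm f : ℂ) ^ 2) with hc_def
  have hc : c ≠ 0 := div_ne_zero ((map_ne_zero _).2 hf0) hnorm
  have hc_self : c * Hinner f (pmul (mono (0, 0)) f) = (starRingEnd ℂ) (f (0, 0)) := by
    rw [pmul_mono_zero, hf.hinner_self, hc_def, div_mul_cancel₀ _ hnorm]
  have hconst : (fun ab => if ab = (0, 0) then c else 0) = c • mono (0, 0) := by
    ext ab
    simp [mono]
  simp only [hconst, forall_isOPA_eq_iff hf hf_ne, isOPA_const_iff hf]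
  constructor
  · intro hweak n k _
    split_ifs with hk
    · rw [hk, hc_self]
    · rw [hweak _ _ hk, mul_zero]
  · intro hopa a b hab
    obtain ⟨n, hn⟩ := chi_surjective (a, b)
    simpa [hn, hab, hc] using hopa n n le_rfl
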